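/- Let N be a positive odd integer and m ≥ 0 an integer such that N + m + 2 is divisible by 3. If the family S_{N,m} is linearly independent over ℂ, then the family S_{N+2,m} is linearly independent over ℂ. -/

import Mathlib

open MvPolynomial

/-- The polynomial `F_{n,j}(u,v) = u^{n-j}(v-w)^j + v^{n-j}(w-u)^j + w^{n-j}(u-v)^j`
where `w = -(u+v)`. -/
noncomputable def F (n j : ℕ) : MvPolynomial (Fin 2) ℂ :=
  let u : MvPolynomial (Fin 2) ℂ := X 0
  let v : MvPolynomial (Fin 2) ℂ := X 1
  let w : MvPolynomial (Fin 2) ℂ := -(u + v)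
  u ^ (n - j) * (v - w) ^ j + v ^ (n - j) * (w - u) ^ j + w ^ (n - j) * (u - v) ^ j

/-!
If `u + v + w = 0`, then `(v - w)² + 3u²`, `(w - u)² + 3v²` and `(u - v)² + 3w²` all equal
`q = 2(u² + v² + w²)`, whence `F_{n+2,j+2} + 3 F_{n+2,j} = q F_{n,j}`. So the span of the
`F_{n+2,j}` contains `F_{n+2,1}` and the products `q F_{n,j}`. These are as many vectors as there
are `F_{n+2,j}`, and if the `F_{n,j}` are linearly independent, so are they as soon as `q` does not
divide `F_{n+2,1}`. For `ζ` a primitive cube root of unity, `q` vanishes at `(1, ζ, ζ²)`, whereas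
there the three summands of `F_{n+2,1}` coincide and are nonzero if `3 ∣ n + 2`.
-/

section LinearAlgebra

variable {K V : Type*} [DivisionRing K] [AddCommGroup V] [Module K V]

theorem linearIndependent_of_succ_add_smul_castSucc {k : ℕ} {f : Fin (k + 1) → V} (c : Fin k → K)
    (h : LinearIndependent K fun i : Fin k => f i.succ + c i • f i.castSucc)
    (h₀ : f 0 ∉ Submodule.span K (Set.range fun i : Fin k => f i.succ + c i • f i.castSucc)) :
    LinearIndependent K f := by
  have hcons := linearIndependent_finCons.2 ⟨h, h₀⟩
  have hmem (i : Fin (k + 1)) : f i ∈ Submodule.span K (Set.range f) :=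
    Submodule.subset_span (Set.mem_range_self i)
  have := Module.Finite.span_of_finite K (Set.finite_range f)
  rw [linearIndependent_iff_card_le_finrank_span, ← finrank_span_eq_card hcons]
  refine Submodule.finrank_mono (Submodule.span_le.2 (Set.range_subset_iff.2 fun i => ?_))
  induction i using Fin.cases with
  | zero => exact hmem 0
  | succ i => exact add_mem (hmem i.succ) (Submodule.smul_mem _ _ (hmem i.castSucc))

end LinearAlgebra

/-- The odd numbers in `[1, N]`, listed in increasing order as `2 * i + 1`. -/
def finEquivOddLE (N : ℕ) : Fin ((N + 1) / 2) ≃ {j : ℕ // 1 ≤ j ∧ j ≤ N ∧ Odd j} where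
  toFun i := ⟨2 * i + 1, by omega, by omega, odd_two_mul_add_one _⟩
  invFun j := ⟨j / 2, by obtain ⟨_, -, hle, i, rfl⟩ := j; dsimp only; omega⟩
  left_inv i := by ext; dsimp only; omega
  right_inv j := by
    obtain ⟨_, -, -, i, rfl⟩ := j
    ext; dsimp only; omega

/-- The cyclic sum defining `F_{n,j}`, for arbitrary elements `u`, `v`, `w` of a commutative ring;
it is homogeneous of degree `n` for `j ≤ n`, while for `j > n` the exponent `n - j` is `0`. -/
def cyclicSum {R : Type*} [CommRing R] (n j : ℕ) (u v w : R) : R :=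
  u ^ (n - j) * (v - w) ^ j + v ^ (n - j) * (w - u) ^ j + w ^ (n - j) * (u - v) ^ j

section CyclicSum

variable {R : Type*} [CommRing R]

theorem map_cyclicSum {S : Type*} [CommRing S] (φ : R →+* S) (n j : ℕ) (u v w : R) :
    φ (cyclicSum n j u v w) = cyclicSum n j (φ u) (φ v) (φ w) := by
  simp only [cyclicSum, map_add, map_mul, map_pow, map_sub]

theorem cyclicSum_add_two_add_three_mul {u v w : R} (hsum : u + v + w = 0) {n j : ℕ} (hj : j ≤ n) :
    cyclicSum (n + 2) (j + 2) u v w + 3 * cyclicSum (n + 2) j u v w =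
      2 * (u ^ 2 + v ^ 2 + w ^ 2) * cyclicSum n j u v w := by
  obtain rfl : w = -(u + v) := by linear_combination hsum
  have hexp : n + 2 - j = n - j + 2 := by omega
  simp only [cyclicSum, Nat.add_sub_add_right, hexp]
  ring

theorem cyclicSum_one_cubeRoot {ζ : R} (hζ : ζ ^ 3 = 1) {n j : ℕ} (hn : 3 ∣ n) (hj : j ≤ n) :
    cyclicSum n j 1 ζ (ζ ^ 2) = 3 * (ζ - ζ ^ 2) ^ j := by
  have hζn : ζ ^ n = 1 := by
    obtain ⟨k, rfl⟩ := hn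
    rw [pow_mul, hζ, one_pow]
  have hsecond : ζ ^ 2 - 1 = ζ * (ζ - ζ ^ 2) := by linear_combination hζ
  have hthird : 1 - ζ = ζ ^ 2 * (ζ - ζ ^ 2) := by linear_combination (ζ - 1) * hζ
  rw [cyclicSum, hsecond, hthird, mul_pow ζ, mul_pow (ζ ^ 2), ← mul_assoc, ← mul_assoc,
    pow_sub_mul_pow ζ hj, pow_sub_mul_pow (ζ ^ 2) hj, pow_right_comm, hζn]
  ring

theorem linearIndependent_cyclicSum_add_two {K : Type*} [Field K] [Algebra K R] {u v w : R}
    (hsum : u + v + w = 0) (hreg : IsLeftRegular (2 * (u ^ 2 + v ^ 2 + w ^ 2))) {n k : ℕ}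
    (hk : 2 * k ≤ n + 1)
    (hdvd : ¬ 2 * (u ^ 2 + v ^ 2 + w ^ 2) ∣ cyclicSum (n + 2) 1 u v w)
    (h : LinearIndependent K fun i : Fin k => cyclicSum n (2 * i + 1) u v w) :
    LinearIndependent K fun i : Fin (k + 1) => cyclicSum (n + 2) (2 * i + 1) u v w := by
  set q := 2 * (u ^ 2 + v ^ 2 + w ^ 2) with hq
  have hrec (i : Fin k) : cyclicSum (n + 2) (2 * i.succ + 1) u v w +
      (3 : K) • cyclicSum (n + 2) (2 * i.castSucc + 1) u v w =
        q * cyclicSum n (2 * i + 1) u v w := by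
    rw [hq, ← cyclicSum_add_two_add_three_mul hsum (by omega), Algebra.smul_def, map_ofNat]
    rfl
  refine linearIndependent_of_succ_add_smul_castSucc (fun _ => (3 : K)) ?_ fun hmem => hdvd ?_
  · simp only [hrec]
    exact h.map' (LinearMap.mulLeft K q) (LinearMap.ker_eq_bot.2 hreg)
  · simp only [hrec] at hmem
    have hspan : Submodule.span K (Set.range fun i : Fin k => q * cyclicSum n (2 * i + 1) u v w) ≤
        (Ideal.span {q}).restrictScalars K :=
      Submodule.span_le.2 <| Set.range_subset_iff.2 fun _ =>
        Ideal.mem_span_singleton.2 (dvd_mul_right _ _)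
    exact Ideal.mem_span_singleton.1 (hspan hmem)

end CyclicSum

section TwoVariables

variable {K : Type*} [Field K]

theorem two_mul_sum_sq_ne_zero (h2 : (2 : K) ≠ 0) :
    2 * (X 0 ^ 2 + X 1 ^ 2 + (-(X 0 + X 1)) ^ 2 : MvPolynomial (Fin 2) K) ≠ 0 := by
  intro hzero
  have heval := congrArg (eval ![1, 0]) hzero
  simp [one_add_one_eq_two, h2] at heval

theorem not_two_mul_sum_sq_dvd_cyclicSum (h3 : (3 : K) ≠ 0) {n j : ℕ} (hn : 3 ∣ n) (hj : j ≤ n) :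
    ¬ 2 * (X 0 ^ 2 + X 1 ^ 2 + (-(X 0 + X 1)) ^ 2 : MvPolynomial (Fin 2) K) ∣
      cyclicSum n j (X 0) (X 1) (-(X 0 + X 1)) := by
  have h3' : (3 : AlgebraicClosure K) ≠ 0 := by
    rwa [← map_ofNat (algebraMap K (AlgebraicClosure K)), map_ne_zero]
  have : NeZero ((3 : ℕ) : AlgebraicClosure K) := ⟨by exact_mod_cast h3'⟩
  obtain ⟨ζ, hζ⟩ := HasEnoughRootsOfUnity.exists_primitiveRoot (AlgebraicClosure K) 3
  have hsum : 1 + ζ + ζ ^ 2 = 0 := by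
    simpa [Finset.sum_range_succ] using hζ.geom_sum_eq_zero (by norm_num)
  have hw : -(1 + ζ) = ζ ^ 2 := by linear_combination -hsum
  have hsub : ζ - ζ ^ 2 ≠ 0 := by
    rw [show ζ - ζ ^ 2 = ζ * (1 - ζ) by ring]
    exact mul_ne_zero (hζ.ne_zero (by norm_num)) (sub_ne_zero.2 (hζ.ne_one (by norm_num)).symm)
  let φ := eval₂Hom (algebraMap K (AlgebraicClosure K)) ![1, ζ]
  have hφ₀ : φ (X 0) = 1 := by simp [φ]
  have hφ₁ : φ (X 1) = ζ := by simp [φ]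
  intro hdvd
  have hφdvd := map_dvd φ hdvd
  rw [map_cyclicSum, map_neg, map_add, hφ₀, hφ₁, hw, cyclicSum_one_cubeRoot hζ.pow_eq_one hn hj]
    at hφdvd
  have hquad : φ (2 * (X 0 ^ 2 + X 1 ^ 2 + (-(X 0 + X 1)) ^ 2)) = 0 := by
    simp only [map_mul, map_add, map_pow, map_neg, map_ofNat, hφ₀, hφ₁]
    linear_combination 4 * hsum
  rw [hquad, zero_dvd_iff] at hφdvd
  exact mul_ne_zero h3' (pow_ne_zero j hsub) hφdvd

theorem stmt_5_general (h2 : (2 : K) ≠ 0) (h3 : (3 : K) ≠ 0) (N m : ℕ) (hdvd : 3 ∣ N + m + 2)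
    (h : LinearIndependent K (fun j : {j : ℕ // 1 ≤ j ∧ j ≤ N ∧ Odd j} =>
      cyclicSum (N + m) j (X 0 : MvPolynomial (Fin 2) K) (X 1) (-(X 0 + X 1)))) :
    LinearIndependent K (fun j : {j : ℕ // 1 ≤ j ∧ j ≤ N + 2 ∧ Odd j} =>
      cyclicSum (N + 2 + m) j (X 0 : MvPolynomial (Fin 2) K) (X 1) (-(X 0 + X 1))) := by
  have hlen : (N + 2 + 1) / 2 = (N + 1) / 2 + 1 := by omega
  have hfin := (linearIndependent_equiv (finEquivOddLE N)).2 h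
  have hreg := (IsRegular.of_ne_zero (two_mul_sum_sq_ne_zero h2)).left
  have hsucc := linearIndependent_cyclicSum_add_two (add_neg_cancel _) hreg (by omega)
    (not_two_mul_sum_sq_dvd_cyclicSum h3 hdvd (by omega)) hfin
  rw [← linearIndependent_equiv ((finCongr hlen.symm).trans (finEquivOddLE (N + 2))),
    Nat.add_right_comm N 2 m]
  exact hsucc

end TwoVariables

/-- Corollary 1.3(b): if `3 ∣ N + m + 2` and the family `S_{N,m}` is linearly independent
over `ℂ`, then so is `S_{N+2,m}`. -/
theorem stmt_5 (N m : ℕ) (hNodd : Odd N) (hNpos : 1 ≤ N) (h3 : 3 ∣ N + m + 2)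
    (h : LinearIndependent ℂ
      (fun j : {j : ℕ // 1 ≤ j ∧ j ≤ N ∧ Odd j} => F (N + m) j.1)) :
    LinearIndependent ℂ
      (fun j : {j : ℕ // 1 ≤ j ∧ j ≤ N + 2 ∧ Odd j} => F (N + 2 + m) j.1) :=
  stmt_5_general two_ne_zero three_ne_zero N m h3 h
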